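/- The permutation ρ defined by ρ(i,j) = (2−i, j) if i ≡ 1 (mod n) and ρ(i,j) = (2−i, 1−j) otherwise is an involutory automorphism of Γ that belongs to the subgroup G = ⟨σ₁, σ₂⟩, fixes the vertex (1,1), and satisfies ρσ₁ρ = σ₁⁻¹ and ρσ₂ρ = σ₂⁻¹. -/

import Mathlib

/-- The lexicographic product `C_n[mK_1]`: vertices `(i,j)` with `(i₁,j₁) ~ (i₂,j₂)`
iff `i₂ = i₁ + 1` or `i₁ = i₂ + 1` (indices modulo `n`). -/
def lexCycle (n m : ℕ) : SimpleGraph (ZMod n × ZMod m) :=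
  SimpleGraph.fromRel (fun u v => v.1 = u.1 + 1)

/-- The representative in `{1, …, n}` of `i` modulo `n`. -/
def zrep {n : ℕ} (i : ZMod n) : ℕ := if i.val = 0 then n else i.val

/-!
The composite `ρσ₁` is `(i, j) ↦ (1 - i, 1 - j)` and `ρσ₂` is a reflection `j ↦ c i - j` in every
fibre, so both are involutions: this gives `ρσ₁ρ = σ₁⁻¹` and `ρσ₂ρ = σ₂⁻¹`.

For `ρ ∈ ⟨σ₁, σ₂⟩`, let `ε i` be `1` if `ī ≡ 0, 3 (mod 4)` and `-1` otherwise, so that `σ₂`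
translates the second coordinate by `ε i` over `i ≠ 1`. As `n ≡ 2 (mod 4)`, there is a function `g`
with `ε i + ε (2 - i) = 2 g i` for `i ≠ 1`, `ε i = g i + g (i + 1)` for all `i`, and `g 1 = 0`. The
first identity says that `σ₂²` translates the fibre over `i` by `2 g i`; since `m` is odd,
`σ₂ ^ (m - 1)` translates it by `-g i`, and `σ₁⁻¹ σ₂ ^ (m - 1) σ₁` translates it by `-g (i + 1)`.
By the second identity these two cancel the translation made by `σ₂` over `i ≠ 1`, and turn its
reflection `j ↦ 2 - j` over `i = 1` into `j ↦ 1 - j`. As `σ₁ ^ n` is `(i, j) ↦ (i, 1 - j)`, it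
follows that `ρ = σ₁ ^ n σ₂ ^ m σ₁⁻¹ σ₂ ^ (m - 1) σ₁`.
-/

theorem two_sub_eq_one_iff {R : Type*} [Ring R] {x : R} : 2 - x = 1 ↔ x = 1 := by
  rw [sub_eq_iff_eq_add, ← one_add_one_eq_two, add_right_inj, eq_comm]

theorem mul_mod_four_eq_two_of_odd {s m : ℕ} (hs : s % 4 = 2) (hm : Odd m) :
    s * m % 4 = 2 := by
  have hm4 : m % 4 = 1 ∨ m % 4 = 3 := Nat.odd_mod_four_iff.mp (Nat.odd_iff.mp hm)
  rcases hm4 with h | h <;> simp [Nat.mul_mod, hs, h]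

theorem pow_apply_of_apply_eq_add {ι A : Type*} [AddMonoid A] {f : Equiv.Perm (ι × A)}
    {d : ι → A} (hf : ∀ i a, f (i, a) = (i, a + d i)) (k : ℕ) (i : ι) (a : A) :
    (f ^ k) (i, a) = (i, a + k • d i) := by
  induction k with
  | zero => simp
  | succ k ih => rw [pow_succ', Equiv.Perm.mul_apply, ih, hf, add_assoc, succ_nsmul]

theorem lexCycle_adj_iff_of_fst_eq_sub {n m : ℕ} {f : ZMod n × ZMod m → ZMod n × ZMod m}
    (hf : f.Injective) {c : ZMod n} (hc : ∀ u, (f u).1 = c - u.1) (u v : ZMod n × ZMod m) :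
    (lexCycle n m).Adj (f u) (f v) ↔ (lexCycle n m).Adj u v := by
  have reverse (x y : ZMod n) : c - y = c - x + 1 ↔ x = y + 1 := by grind
  simp only [lexCycle, SimpleGraph.fromRel_adj, hf.ne_iff, hc, reverse, or_comm]

section Representative

variable {n : ℕ}

theorem zrep_natCast {a : ℕ} (ha : 1 ≤ a) (han : a ≤ n) : zrep (a : ZMod n) = a := by
  rcases han.lt_or_eq with hlt | rfl
  · simp [zrep, ZMod.val_natCast_of_lt hlt, Nat.one_le_iff_ne_zero.mp ha]
  · simp [zrep]

theorem zrep_zero : zrep (0 : ZMod n) = n := by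
  simp [zrep]

variable [NeZero n]

theorem natCast_zrep (i : ZMod n) : (zrep i : ZMod n) = i := by
  by_cases hi : i = 0 <;> simp [zrep, hi]

theorem one_le_zrep (i : ZMod n) : 1 ≤ zrep i := by
  have := NeZero.pos n
  unfold zrep
  split_ifs <;> omega

theorem zrep_le (i : ZMod n) : zrep i ≤ n := by
  have := ZMod.val_lt i
  unfold zrep
  split_ifs <;> omega

theorem zrep_one : zrep (1 : ZMod n) = 1 := by
  simpa using zrep_natCast le_rfl (NeZero.one_le (n := n))

theorem zrep_add_one {i : ZMod n} (hi : i ≠ 0) : zrep (i + 1) = zrep i + 1 := by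
  have hne : zrep i ≠ n := fun h => hi (by rw [← natCast_zrep i, h, ZMod.natCast_self])
  have hle := zrep_le i
  conv_lhs => rw [← natCast_zrep i, ← Nat.cast_add_one]
  exact zrep_natCast (by omega) (by omega)

theorem zrep_two_sub {i : ZMod n} (hi : i ≠ 1) : zrep (2 - i) = n + 2 - zrep i := by
  have hne : zrep i ≠ 1 := fun h => hi (by rw [← natCast_zrep i, h, Nat.cast_one])
  have hpos := one_le_zrep i
  have hle := zrep_le i
  have hcast : 2 - i = ((n + 2 - zrep i : ℕ) : ZMod n) := by
    rw [Nat.cast_sub (by omega), natCast_zrep]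
    simp
  rw [hcast, zrep_natCast (by omega) (by omega)]

end Representative

section Sign

variable {n : ℕ} (R : Type*) [Ring R]

/-- The sign `ε i`, by which `σ₂` translates the fibre over `i` when `i ≠ 1`. -/
def stepSign (i : ZMod n) : R :=
  if zrep i % 4 = 0 ∨ zrep i % 4 = 3 then 1 else -1

/-- Half the translation made by `σ₂²` on the fibre over `i`, the function `g` above. It is
given by its values because `2` need not be invertible in `R`. -/
def halfDrift (i : ZMod n) : R :=
  if zrep i % 4 = 0 then 1 else if zrep i % 4 = 2 then -1 else 0

theorem halfDrift_one [NeZero n] : halfDrift R (1 : ZMod n) = 0 := by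
  simp [halfDrift, zrep_one]

theorem stepSign_add_stepSign_two_sub (hn : n % 4 = 2) {i : ZMod n} (hi : i ≠ 1) :
    stepSign R i + stepSign R (2 - i) = 2 * halfDrift R i := by
  have : NeZero n := ⟨by omega⟩
  have hle := zrep_le i
  simp only [stepSign, halfDrift, zrep_two_sub hi]
  split_ifs <;> first | omega | norm_num

theorem stepSign_eq_halfDrift_add (hn : n % 4 = 2) (i : ZMod n) :
    stepSign R i = halfDrift R i + halfDrift R (i + 1) := by
  have : NeZero n := ⟨by omega⟩
  by_cases hi : i = 0
  · simp [hi, stepSign, halfDrift, zrep_zero, zrep_one, hn]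
  · simp only [stepSign, halfDrift, zrep_add_one hi]
    split_ifs <;> first | omega | norm_num

end Sign

section Permutations

variable {n : ℕ} {R : Type*} [Ring R]

variable (n R) in
/-- The permutation `σ₁`, with fibres indexed by an arbitrary ring. -/
def twistedRotation : Equiv.Perm (ZMod n × R) :=
  (Equiv.addRight 1).prodShear fun i => if i = 0 then Equiv.subLeft 1 else 1

/-- The permutation `σ₂`, with an arbitrary family of translations `e` off the fibre over `1`. -/
def twistedReflection (e : ZMod n → R) : Equiv.Perm (ZMod n × R) :=
  (Equiv.subLeft 2).prodShear fun i => if i = 1 then Equiv.subLeft 2 else Equiv.addRight (e i)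

variable (n R) in
/-- The permutation `ρ`, with fibres indexed by an arbitrary ring. -/
def invertingReflection : Equiv.Perm (ZMod n × R) :=
  (Equiv.subLeft 2).prodShear fun i => if i = 1 then 1 else Equiv.subLeft 1

theorem twistedRotation_apply (i : ZMod n) (j : R) :
    twistedRotation n R (i, j) = (i + 1, if i = 0 then 1 - j else j) := by
  by_cases hi : i = 0 <;> simp [twistedRotation, hi]

theorem twistedReflection_apply (e : ZMod n → R) (i : ZMod n) (j : R) :
    twistedReflection e (i, j) = (2 - i, if i = 1 then 2 - j else j + e i) := by
  by_cases hi : i = 1 <;> simp [twistedReflection, hi]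

theorem invertingReflection_apply (i : ZMod n) (j : R) :
    invertingReflection n R (i, j) = (2 - i, if i = 1 then j else 1 - j) := by
  by_cases hi : i = 1 <;> simp [invertingReflection, hi]

theorem invertingReflection_mul_self :
    invertingReflection n R * invertingReflection n R = 1 := by
  ext1 ⟨i, j⟩
  by_cases hi : i = 1 <;> simp [invertingReflection_apply, two_sub_eq_one_iff, hi]

theorem invertingReflection_mul_twistedRotation :
    invertingReflection n R * twistedRotation n R = Equiv.subLeft 1 := by
  ext1 ⟨i, j⟩
  have base : 2 - (i + 1) = 1 - i := by ring
  rw [Equiv.Perm.mul_apply, twistedRotation_apply, invertingReflection_apply, base,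
    Equiv.subLeft_apply, Prod.one_eq_mk, Prod.mk_sub_mk]
  by_cases hi : i = 0 <;> simp [hi]

theorem invertingReflection_mul_twistedReflection_apply (e : ZMod n → R) (i : ZMod n) (j : R) :
    (invertingReflection n R * twistedReflection e) (i, j) =
      (i, (if i = 1 then 2 else 1 - e i) - j) := by
  by_cases hi : i = 1 <;>
    simp [invertingReflection_apply, twistedReflection_apply, two_sub_eq_one_iff, hi,
      sub_add_eq_sub_sub_swap]

theorem invertingReflection_conj_twistedRotation :
    invertingReflection n R * twistedRotation n R * invertingReflection n R =
      (twistedRotation n R)⁻¹ := by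
  refine eq_inv_of_mul_eq_one_left ?_
  rw [mul_assoc, invertingReflection_mul_twistedRotation]
  ext1 x
  simp

theorem invertingReflection_conj_twistedReflection (e : ZMod n → R) :
    invertingReflection n R * twistedReflection e * invertingReflection n R =
      (twistedReflection e)⁻¹ := by
  refine eq_inv_of_mul_eq_one_left ?_
  rw [mul_assoc]
  ext1 ⟨i, j⟩
  rw [Equiv.Perm.mul_apply]
  simp only [invertingReflection_mul_twistedReflection_apply, sub_sub_cancel, Equiv.Perm.one_apply]

theorem twistedRotation_pow_apply_one {t : ℕ} (ht : t < n) (j : R) :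
    (twistedRotation n R ^ t) (1, j) = (((t + 1 : ℕ) : ZMod n), j) := by
  induction t with
  | zero => simp
  | succ t ih =>
    have hne : ((t + 1 : ℕ) : ZMod n) ≠ 0 := by
      rw [Ne, ZMod.natCast_eq_zero_iff]
      exact Nat.not_dvd_of_pos_of_lt t.succ_pos ht
    rw [pow_succ', Equiv.Perm.mul_apply, ih (by omega), twistedRotation_apply, if_neg hne,
      ← Nat.cast_add_one]

theorem twistedRotation_pow_self_apply [NeZero n] (i : ZMod n) (j : R) :
    (twistedRotation n R ^ n) (i, j) = (i, 1 - j) := by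
  have hpos := NeZero.pos n
  have reach (j : R) : (twistedRotation n R ^ (zrep i - 1)) (1, j) = (i, j) := by
    have h1 := one_le_zrep i
    have hle := zrep_le i
    rw [twistedRotation_pow_apply_one (by omega), Nat.sub_add_cancel h1, natCast_zrep]
  have full_turn : (twistedRotation n R ^ n) (1, j) = (1, 1 - j) := by
    rw [← Nat.sub_add_cancel hpos, pow_succ', Equiv.Perm.mul_apply,
      twistedRotation_pow_apply_one (by omega), Nat.sub_add_cancel hpos]
    simp [twistedRotation_apply]
  calc (twistedRotation n R ^ n) (i, j)
      = (twistedRotation n R ^ n * twistedRotation n R ^ (zrep i - 1)) (1, j) := by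
        rw [Equiv.Perm.mul_apply, reach]
    _ = (twistedRotation n R ^ (zrep i - 1) * twistedRotation n R ^ n) (1, j) := by
        rw [pow_mul_comm]
    _ = (i, 1 - j) := by rw [Equiv.Perm.mul_apply, full_turn, reach]

theorem twistedReflection_sq_apply (hn : n % 4 = 2) (i : ZMod n) (j : R) :
    (twistedReflection (stepSign R) ^ 2) (i, j) = (i, j + 2 * halfDrift R i) := by
  have : NeZero n := ⟨by omega⟩
  by_cases hi : i = 1
  · subst hi
    simp [sq, twistedReflection_apply, two_sub_eq_one_iff, halfDrift_one]
  · simp [sq, twistedReflection_apply, two_sub_eq_one_iff, hi, add_assoc,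
      stepSign_add_stepSign_two_sub R hn hi]

variable {m : ℕ}

theorem twistedReflection_pow_sub_one_apply (hn : n % 4 = 2) (hm : Odd m) (hmR : (m : R) = 0)
    (i : ZMod n) (j : R) :
    (twistedReflection (stepSign R) ^ (m - 1)) (i, j) = (i, j - halfDrift R i) := by
  obtain ⟨k, rfl⟩ := hm
  have two_mul_k : (k : R) * 2 = -1 := by
    rw [← Nat.cast_ofNat, ← Nat.cast_mul, mul_comm, eq_neg_iff_add_eq_zero]
    exact_mod_cast hmR
  rw [Nat.add_sub_cancel, pow_mul,
    pow_apply_of_apply_eq_add (twistedReflection_sq_apply hn), nsmul_eq_mul, ← mul_assoc,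
    two_mul_k, neg_one_mul, sub_eq_add_neg]

theorem twistedReflection_pow_sub_one_conj_apply (hn : n % 4 = 2) (hm : Odd m) (hmR : (m : R) = 0)
    (i : ZMod n) (j : R) :
    ((twistedRotation n R)⁻¹ * twistedReflection (stepSign R) ^ (m - 1) * twistedRotation n R :
      Equiv.Perm (ZMod n × R)) (i, j) = (i, j - halfDrift R (i + 1)) := by
  have : NeZero n := ⟨by omega⟩
  rw [mul_assoc, Equiv.Perm.mul_apply, Equiv.Perm.inv_eq_iff_eq, Equiv.Perm.mul_apply,
    twistedRotation_apply, twistedRotation_apply, twistedReflection_pow_sub_one_apply hn hm hmR]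
  by_cases hi : i = 0 <;> simp [hi, halfDrift_one]

theorem invertingReflection_eq_pow_mul_pow_mul_conj (hn : n % 4 = 2) (hm : Odd m)
    (hmR : (m : R) = 0) :
    invertingReflection n R =
      twistedRotation n R ^ n * twistedReflection (stepSign R) ^ m *
        ((twistedRotation n R)⁻¹ * twistedReflection (stepSign R) ^ (m - 1) *
          twistedRotation n R) := by
  have : NeZero n := ⟨by omega⟩
  ext1 ⟨i, j⟩
  rw [Equiv.Perm.mul_apply, twistedReflection_pow_sub_one_conj_apply hn hm hmR,
    Equiv.Perm.mul_apply, ← mul_pow_sub_one hm.pos.ne' (twistedReflection _), Equiv.Perm.mul_apply,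
    twistedReflection_pow_sub_one_apply hn hm hmR, twistedReflection_apply,
    twistedRotation_pow_self_apply, invertingReflection_apply]
  have sign_split := stepSign_eq_halfDrift_add R hn i
  congr 1
  by_cases hi : i = 1
  · have sign_one : stepSign R i = -1 := by simp [hi, stepSign, zrep_one]
    have drift_one : halfDrift R i = 0 := hi ▸ halfDrift_one R
    rw [sign_one, drift_one, zero_add] at sign_split
    rw [if_pos hi, if_pos hi, drift_one, ← sign_split, ← one_add_one_eq_two]
    abel
  · rw [if_neg hi, if_neg hi, sign_split]
    abel

theorem invertingReflection_mem_closure (hn : n % 4 = 2) (hm : Odd m) (hmR : (m : R) = 0) :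
    invertingReflection n R ∈
      Subgroup.closure {twistedRotation n R, twistedReflection (stepSign R)} := by
  set G : Subgroup (Equiv.Perm (ZMod n × R)) :=
    Subgroup.closure {twistedRotation n R, twistedReflection (stepSign R)}
  have h₁ : twistedRotation n R ∈ G := Subgroup.subset_closure (.inl rfl)
  have h₂ : twistedReflection (stepSign R) ∈ G := Subgroup.subset_closure (.inr rfl)
  rw [invertingReflection_eq_pow_mul_pow_mul_conj hn hm hmR]
  exact mul_mem (mul_mem (pow_mem h₁ n) (pow_mem h₂ m))
    (mul_mem (mul_mem (inv_mem h₁) (pow_mem h₂ (m - 1))) h₁)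

end Permutations

theorem statement15_general
    (m n : ℕ) (hm : Odd m) (hn : n % 4 = 2)
    (σ₁ σ₂ ρ : Equiv.Perm (ZMod n × ZMod m))
    (hσ₁ : ∀ (i : ZMod n) (j : ZMod m),
      σ₁ (i, j) = if i = 0 then (i + 1, 1 - j) else (i + 1, j))
    (hσ₂ : ∀ (i : ZMod n) (j : ZMod m),
      σ₂ (i, j) = if i = 1 then (2 - i, 2 - j)
        else if zrep i % 4 = 0 ∨ zrep i % 4 = 3 then (2 - i, j + 1) else (2 - i, j - 1))
    (hρ : ∀ (i : ZMod n) (j : ZMod m),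
      ρ (i, j) = if i = 1 then (2 - i, j) else (2 - i, 1 - j)) :
    (∀ u v : ZMod n × ZMod m, (lexCycle n m).Adj (ρ u) (ρ v) ↔ (lexCycle n m).Adj u v) ∧
      ρ * ρ = 1 ∧ ρ ∈ Subgroup.closure {σ₁, σ₂} ∧
      ρ ((1, 1) : ZMod n × ZMod m) = (1, 1) ∧
      ρ * σ₁ * ρ = σ₁⁻¹ ∧ ρ * σ₂ * ρ = σ₂⁻¹ := by
  obtain rfl : σ₁ = twistedRotation n (ZMod m) := by
    ext1 ⟨i, j⟩
    rw [hσ₁, twistedRotation_apply, apply_ite (Prod.mk _)]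
  obtain rfl : σ₂ = twistedReflection (stepSign (ZMod m)) := by
    ext1 ⟨i, j⟩
    rw [hσ₂, twistedReflection_apply, stepSign]
    split_ifs <;> simp only [sub_eq_add_neg]
  obtain rfl : ρ = invertingReflection n (ZMod m) := by
    ext1 ⟨i, j⟩
    rw [hρ, invertingReflection_apply, apply_ite (Prod.mk _)]
  refine ⟨lexCycle_adj_iff_of_fst_eq_sub (Equiv.injective _) fun _ => rfl,
    invertingReflection_mul_self,
    invertingReflection_mem_closure hn hm (ZMod.natCast_self m), ?_,
    invertingReflection_conj_twistedRotation, invertingReflection_conj_twistedReflection _⟩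
  rw [invertingReflection_apply, if_pos rfl, two_sub_eq_one_iff.mpr rfl]

theorem statement15
    (m s n : ℕ) (hm : 3 ≤ m) (hmo : Odd m) (hs : 0 < s) (hs4 : s % 4 = 2) (hn : n = s * m)
    (σ₁ σ₂ ρ : Equiv.Perm (ZMod n × ZMod m))
    (hσ₁ : ∀ (i : ZMod n) (j : ZMod m),
      σ₁ (i, j) = if i = 0 then (i + 1, 1 - j) else (i + 1, j))
    (hσ₂ : ∀ (i : ZMod n) (j : ZMod m),
      σ₂ (i, j) = if i = 1 then (2 - i, 2 - j)
        else if zrep i % 4 = 0 ∨ zrep i % 4 = 3 then (2 - i, j + 1) else (2 - i, j - 1))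
    (hρ : ∀ (i : ZMod n) (j : ZMod m),
      ρ (i, j) = if i = 1 then (2 - i, j) else (2 - i, 1 - j))
    :
    (∀ u v : ZMod n × ZMod m, (lexCycle n m).Adj (ρ u) (ρ v) ↔ (lexCycle n m).Adj u v) ∧
      ρ * ρ = 1 ∧ ρ ∈ Subgroup.closure {σ₁, σ₂} ∧
      ρ ((1, 1) : ZMod n × ZMod m) = (1, 1) ∧
      ρ * σ₁ * ρ = σ₁⁻¹ ∧ ρ * σ₂ * ρ = σ₂⁻¹ := by
  subst hn
  exact statement15_general m _ hmo (mul_mod_four_eq_two_of_odd hs4 hmo) σ₁ σ₂ ρ hσ₁ hσ₂ hρ
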